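/- Let 0 ≤ α < 1/4 and, for each positive integer N, let x̃^{(N)}_{−N},…,x̃^{(N)}_N be any set of α-perturbed nodes, with w̃^{(N)}_{−N},…,w̃^{(N)}_N the unique quadrature weights exact on T_N at these nodes. Then for every continuous 2π-periodic function f: ℝ → ℂ, the quadrature values Ĩ_N(f) = Σ_{j=−N}^{N} w̃^{(N)}_j f(x̃^{(N)}_j) converge to ∫_{−π}^{π} f(x) dx as N → ∞. -/

import Mathlib

open Real Finset

/-- `q` is a trigonometric polynomial of degree ≤ N. -/
def IsTrigPoly (N : ℕ) (q : ℝ → ℂ) : Prop :=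
  ∃ c : ℤ → ℂ, ∀ x : ℝ,
    q x = ∑ k ∈ Finset.Icc (-(N:ℤ)) (N:ℤ), c k * Complex.exp (Complex.I * (k : ℂ) * (x : ℂ))

/-- `x` is a set of α-perturbed nodes of size 2N+1. -/
def PerturbedNodes (N : ℕ) (α : ℝ) (x : ℤ → ℝ) : Prop :=
  ∀ j ∈ Finset.Icc (-(N:ℤ)) (N:ℤ),
    |x j - (j : ℝ) * (2*π/(2*N+1))| ≤ α * (2*π/(2*N+1))

/-- The weights `w` form a quadrature rule at the nodes `x` that is exact on `T_N`. -/
def ExactQuad (N : ℕ) (x : ℤ → ℝ) (w : ℤ → ℝ) : Prop :=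
  ∀ q : ℝ → ℂ, IsTrigPoly N q →
    ∑ j ∈ Finset.Icc (-(N:ℤ)) (N:ℤ), (w j : ℂ) * q (x j) = ∫ t in (-π)..π, q t

/-!
The argument is the one behind Kadec's 1/4-theorem. On `[-π, π]` the functions `1 - cos (δ t)` and
`sin (δ t)` have absolutely convergent expansions in exponentials; the moduli of their coefficients
increase with `|δ|` and, at `δ = α`, add up to `1 - cos (π α)` and `sin (π α)`. Hence moving the
nodes by at most `α h` changes the matrix `(e^{i k x_j})` by at most
`(1 - cos (π α) + sin (π α)) √(2N + 1)` in operator norm. At equispaced nodes that matrix is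
`√(2N + 1)` times a unitary one, so for `α < 1/4` the perturbed matrix is still bounded below by
`(cos (π α) - sin (π α)) √(2N + 1)`. Exactness says that it maps the weights to `2π e₀`, and
Cauchy–Schwarz gives `∑ |w_j| ≤ 2π / (cos (π α) - sin (π α))` for every `N`. Convergence follows
from this uniform bound and the density of trigonometric polynomials.
-/

section FourierSeries

lemma fourier_two_pi_coe_apply (m : ℤ) (t : ℝ) :
    fourier m (t : AddCircle (2 * π)) = Complex.exp (Complex.I * m * t) := by
  have hπ : (π : ℂ) ≠ 0 := Complex.ofReal_ne_zero.2 pi_ne_zero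
  rw [fourier_coe_apply]
  congr 1
  push_cast
  field_simp

lemma fourierCoeff_liftIco_neg_pi [Fact (0 < 2 * π)] (f : ℝ → ℂ) (m : ℤ) :
    fourierCoeff (AddCircle.liftIco (2 * π) (-π) f) m
      = (2 * π)⁻¹ * ∫ t in (-π)..π, Complex.exp (-(Complex.I * m * t)) * f t := by
  have hend : -π + 2 * π = π := by ring
  rw [fourierCoeff_eq_intervalIntegral _ _ (-π), hend, Complex.real_smul]
  congr 1
  · push_cast
    rw [one_div]
  refine intervalIntegral.integral_congr_Ioo_of_le (by linarith [pi_pos]) fun t ht => ?_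
  rw [AddCircle.liftIco_coe_apply (by rw [hend]; exact Set.Ioo_subset_Ico_self ht),
    fourier_two_pi_coe_apply, smul_eq_mul]
  push_cast
  ring_nf

lemma hasSum_fourier_of_eq_endpoints {f : ℝ → ℂ} (hf : ContinuousOn f (Set.Icc (-π) π))
    (hper : f (-π) = f π) {c : ℤ → ℂ}
    (hc : ∀ m : ℤ, ∫ t in (-π)..π, Complex.exp (-(Complex.I * m * t)) * f t = 2 * π * c m)
    (hs : Summable c) {t : ℝ} (ht : t ∈ Set.Icc (-π) π) :
    HasSum (fun m : ℤ => c m * Complex.exp (Complex.I * m * t)) (f t) := by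
  have : Fact (0 < 2 * π) := ⟨two_pi_pos⟩
  have hend : -π + 2 * π = π := by ring
  let F : C(AddCircle (2 * π), ℂ) := ⟨AddCircle.liftIco (2 * π) (-π) f,
    AddCircle.liftIco_continuous (by rw [hend, hper]) (by rwa [hend])⟩
  have hcoeff : fourierCoeff F = c := by
    ext m
    rw [ContinuousMap.coe_mk, fourierCoeff_liftIco_neg_pi, hc]
    have hπ : (π : ℂ) ≠ 0 := Complex.ofReal_ne_zero.2 pi_ne_zero
    push_cast
    field_simp
  have hval : F (t : AddCircle (2 * π)) = f t := by
    rcases eq_or_lt_of_le ht.2 with rfl | hlt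
    · have : ((π : ℝ) : AddCircle (2 * π)) = ((-π : ℝ) : AddCircle (2 * π)) := by
        rw [← AddCircle.coe_add_period (2 * π) (-π), hend]
      rw [this, ← hper]
      exact AddCircle.liftIco_coe_apply ⟨le_rfl, by linarith [pi_pos]⟩
    · exact AddCircle.liftIco_coe_apply ⟨ht.1, by rwa [hend]⟩
  have := has_pointwise_sum_fourier_series_of_summable (f := F) (by rwa [hcoeff]) t
  simpa only [hval, hcoeff, fourier_two_pi_coe_apply, smul_eq_mul] using this

lemma integral_exp_I_mul (ω : ℝ) :
    ∫ t in (-π)..π, Complex.exp (Complex.I * ω * t) = 2 * π * sinc (π * ω) := by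
  rcases eq_or_ne ω 0 with rfl | hω
  · simp [two_mul]
  have hωC : (ω : ℂ) ≠ 0 := Complex.ofReal_ne_zero.2 hω
  have hπ : (π : ℂ) ≠ 0 := Complex.ofReal_ne_zero.2 pi_ne_zero
  have hpos : Complex.I * ω * π = (π * ω : ℂ) * Complex.I := by ring
  have hneg : Complex.I * ω * (-π : ℝ) = (-(π * ω) : ℂ) * Complex.I := by push_cast; ring
  rw [integral_exp_mul_complex (by simp [hωC]), sinc_of_ne_zero (by positivity), hpos, hneg]
  simp only [Complex.exp_mul_I, Complex.cos_neg, Complex.sin_neg]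
  push_cast
  field_simp
  ring

lemma integral_exp_I_mul_int (k : ℤ) :
    ∫ t in (-π)..π, Complex.exp (Complex.I * k * t) = if k = 0 then (2 * π : ℂ) else 0 := by
  have := integral_exp_I_mul k
  rw [Complex.ofReal_intCast] at this
  rw [this]
  split_ifs with hk
  · simp [hk]
  · rw [sinc_of_ne_zero (mul_ne_zero pi_ne_zero (Int.cast_ne_zero.2 hk)), mul_comm π (k : ℝ),
      sin_int_mul_pi]
    simp

lemma intervalIntegrable_exp_I_mul (a b ω : ℝ) :
    IntervalIntegrable (fun t : ℝ => Complex.exp (Complex.I * ω * t)) MeasureTheory.volume a b :=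
  Continuous.intervalIntegrable (by fun_prop) a b

lemma integral_exp_neg_mul_cos (δ ν : ℝ) :
    ∫ t in (-π)..π, Complex.exp (-(Complex.I * ν * t)) * Complex.cos (δ * t)
      = π * (sinc (π * (δ - ν)) + sinc (π * (δ + ν))) := by
  have hcos (t : ℝ) : Complex.exp (-(Complex.I * ν * t)) * Complex.cos (δ * t)
      = 1 / 2 * (Complex.exp (Complex.I * (δ - ν : ℝ) * t)
        + Complex.exp (Complex.I * (-(δ + ν) : ℝ) * t)) := by
    rw [Complex.cos, mul_div_assoc', mul_add, ← Complex.exp_add, ← Complex.exp_add, div_eq_inv_mul,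
      one_div]
    push_cast
    ring_nf
  simp_rw [hcos]
  rw [intervalIntegral.integral_const_mul, intervalIntegral.integral_add
    (intervalIntegrable_exp_I_mul _ _ _) (intervalIntegrable_exp_I_mul _ _ _),
    integral_exp_I_mul, integral_exp_I_mul, mul_neg, sinc_neg]
  ring

lemma integral_exp_neg_mul_sin (δ ν : ℝ) :
    ∫ t in (-π)..π, Complex.exp (-(Complex.I * ν * t)) * Complex.sin (δ * t)
      = -(Complex.I * π) * (sinc (π * (δ - ν)) - sinc (π * (δ + ν))) := by
  have hsin (t : ℝ) : Complex.exp (-(Complex.I * ν * t)) * Complex.sin (δ * t)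
      = Complex.I / 2 * (Complex.exp (Complex.I * (-(δ + ν) : ℝ) * t)
        - Complex.exp (Complex.I * (δ - ν : ℝ) * t)) := by
    rw [Complex.sin, mul_div_assoc', ← mul_assoc, mul_sub, ← Complex.exp_add, ← Complex.exp_add]
    push_cast
    ring_nf
  simp_rw [hsin]
  rw [intervalIntegral.integral_const_mul, intervalIntegral.integral_sub
    (intervalIntegrable_exp_I_mul _ _ _) (intervalIntegrable_exp_I_mul _ _ _),
    integral_exp_I_mul, integral_exp_I_mul, mul_neg, sinc_neg]
  ring

end FourierSeries

section KadecCoefficients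

lemma sinc_sub_add_sinc_add_of_sin_eq_zero {δ ν : ℝ} (h : ν ^ 2 ≠ δ ^ 2) (hν : sin (ν * π) = 0) :
    sinc (π * (δ - ν)) + sinc (π * (δ + ν))
      = -(2 * (δ * sin (π * δ) / (π * (ν ^ 2 - δ ^ 2)) * cos (ν * π))) := by
  have hne : ν ^ 2 - δ ^ 2 ≠ 0 := sub_ne_zero.2 h
  have hsub : δ - ν ≠ 0 := fun h0 => hne (by linear_combination -(δ + ν) * h0)
  have hadd : δ + ν ≠ 0 := fun h0 => hne (by linear_combination (ν - δ) * h0)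
  have hfactor : ν ^ 2 - δ ^ 2 = -((δ - ν) * (δ + ν)) := by ring
  rw [sinc_of_ne_zero (by positivity), sinc_of_ne_zero (by positivity), mul_sub, mul_add,
    sin_sub, sin_add, mul_comm π ν, hν, hfactor, mul_comm ν π, ← mul_sub, ← mul_add]
  field_simp
  ring

lemma sinc_sub_sub_sinc_add_of_cos_eq_zero {δ ν : ℝ} (h : ν ^ 2 ≠ δ ^ 2) (hν : cos (ν * π) = 0) :
    sinc (π * (δ - ν)) - sinc (π * (δ + ν))
      = 2 * (δ * cos (π * δ) / (π * (ν ^ 2 - δ ^ 2)) * sin (ν * π)) := by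
  have hne : ν ^ 2 - δ ^ 2 ≠ 0 := sub_ne_zero.2 h
  have hsub : δ - ν ≠ 0 := fun h0 => hne (by linear_combination -(δ + ν) * h0)
  have hadd : δ + ν ≠ 0 := fun h0 => hne (by linear_combination (ν - δ) * h0)
  have hfactor : ν ^ 2 - δ ^ 2 = -((δ - ν) * (δ + ν)) := by ring
  rw [sinc_of_ne_zero (by positivity), sinc_of_ne_zero (by positivity), mul_sub, mul_add,
    sin_sub, sin_add, mul_comm π ν, hν, hfactor, mul_comm ν π, ← mul_sub, ← mul_add]
  field_simp
  ring

/-- The coefficient of `e^{im(t - π)}` in Kadec's expansion of `1 - cos (δ t)` on `[-π, π]`. -/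
noncomputable def cosCoeff (δ : ℝ) (m : ℤ) : ℝ :=
  if m = 0 then 1 - sinc (π * δ) else δ * sin (π * δ) / (π * ((m : ℝ) ^ 2 - δ ^ 2))

/-- The coefficient of `e^{i(m - 1/2)(t - π)}` in Kadec's expansion of `sin (δ t)` on `[-π, π]`.
The half-integer frequencies are those of the antiperiodic functions. -/
noncomputable def sinCoeff (δ : ℝ) (m : ℤ) : ℝ :=
  δ * cos (π * δ) / (π * (((m : ℝ) - 1 / 2) ^ 2 - δ ^ 2))

lemma one_le_sq_intCast {m : ℤ} (hm : m ≠ 0) : (1 : ℝ) ≤ (m : ℝ) ^ 2 := by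
  exact_mod_cast Int.add_one_le_of_lt (sq_pos_of_ne_zero hm)

lemma quarter_le_sq_intCast_sub_half (m : ℤ) : (1 / 4 : ℝ) ≤ ((m : ℝ) - 1 / 2) ^ 2 := by
  have hm : (0 : ℤ) ≤ m * (m - 1) := by
    rcases le_or_gt m 0 with h | h <;> nlinarith
  have : (0 : ℝ) ≤ m * (m - 1) := by exact_mod_cast hm
  linarith

lemma summable_inv_sq_add_sub_sq (θ δ : ℝ) :
    Summable fun m : ℤ => (((m : ℝ) + θ) ^ 2 - δ ^ 2)⁻¹ := by
  have hO (z : ℂ) := EisensteinSeries.linear_inv_isBigO_right 1 z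
  rw [← Complex.summable_ofReal]
  push_cast
  refine EisensteinSeries.summable_inv_of_isBigO_rpow_inv one_lt_two ?_
  refine ((hO (θ - δ)).mul (hO (θ + δ))).congr (fun m => ?_) fun m => ?_
  · rw [← mul_inv]
    push_cast
    ring
  · rw [← mul_inv, rpow_two, sq_abs, sq]

lemma summable_cosCoeff (δ : ℝ) : Summable (cosCoeff δ) := by
  refine ((summable_inv_sq_add_sub_sq 0 δ).mul_left (δ * sin (π * δ) / π)).congr_cofinite ?_
  filter_upwards [Set.Finite.compl_mem_cofinite (Set.finite_singleton 0)] with m hm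
  rw [cosCoeff, if_neg (by simpa using hm), add_zero, ← div_eq_mul_inv, div_div]

lemma summable_sinCoeff (δ : ℝ) : Summable (sinCoeff δ) := by
  refine ((summable_inv_sq_add_sub_sq (-(1 / 2)) δ).mul_left (δ * cos (π * δ) / π)).congr
    fun m => ?_
  rw [sinCoeff, ← sub_eq_add_neg, ← div_eq_mul_inv, div_div]

lemma cos_int_sub_half_mul_pi (m : ℤ) : cos (((m : ℝ) - 1 / 2) * π) = 0 :=
  cos_eq_zero_iff.2 ⟨m - 1, by push_cast; ring⟩

lemma integral_exp_neg_mul_one_sub_cos {δ : ℝ} (hδ : |δ| < 1) (m : ℤ) :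
    ∫ s in (-π)..π, Complex.exp (-(Complex.I * m * s)) * (1 - Complex.cos (δ * s))
      = 2 * π * (cosCoeff δ m * Complex.exp ((-(m * π) : ℝ) * Complex.I)) := by
  have hcos := integral_exp_neg_mul_cos δ m
  have hexp : ∫ s in (-π)..π, Complex.exp (-(Complex.I * m * s))
      = if m = 0 then (2 * π : ℂ) else 0 := by
    simpa only [Int.cast_neg, mul_neg, neg_mul, neg_eq_zero] using integral_exp_I_mul_int (-m)
  push_cast at hcos
  simp_rw [mul_sub, mul_one]
  rw [intervalIntegral.integral_sub (Continuous.intervalIntegrable (by fun_prop) _ _)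
    (Continuous.intervalIntegrable (by fun_prop) _ _), hcos, hexp]
  rcases eq_or_ne m 0 with rfl | hm
  · simp only [cosCoeff, if_true, Int.cast_zero, sub_zero, add_zero, zero_mul, neg_zero,
      Complex.ofReal_zero, Complex.exp_zero]
    push_cast
    ring
  have hsq : (m : ℝ) ^ 2 ≠ δ ^ 2 :=
    (((sq_lt_one_iff_abs_lt_one δ).2 hδ).trans_le (one_le_sq_intCast hm)).ne'
  rw [if_neg hm, Complex.exp_mul_I, ← Complex.ofReal_cos, ← Complex.ofReal_sin, cos_neg, sin_neg,
    sin_int_mul_pi, cosCoeff, if_neg hm, ← Complex.ofReal_add,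
    sinc_sub_add_sinc_add_of_sin_eq_zero hsq (sin_int_mul_pi m)]
  push_cast
  ring

lemma hasSum_one_sub_cos {δ : ℝ} (hδ : |δ| < 1) {t : ℝ} (ht : t ∈ Set.Icc (-π) π) :
    HasSum (fun m : ℤ => (cosCoeff δ m : ℂ) * Complex.exp ((m * (t - π) : ℝ) * Complex.I))
      (1 - cos (δ * t) : ℝ) := by
  have hs : Summable fun m : ℤ => (cosCoeff δ m : ℂ) * Complex.exp ((-(m * π) : ℝ) * Complex.I) :=
    (summable_cosCoeff δ).norm.of_norm_bounded fun m => by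
      rw [norm_mul, Complex.norm_exp_ofReal_mul_I, mul_one, Complex.norm_real]
  have := hasSum_fourier_of_eq_endpoints (f := fun s : ℝ => 1 - Complex.cos (δ * s))
    (by fun_prop) (by simp) (integral_exp_neg_mul_one_sub_cos hδ) hs ht
  push_cast
  refine this.congr_fun fun m => ?_
  rw [mul_assoc (cosCoeff δ m : ℂ), ← Complex.exp_add]
  push_cast
  ring_nf

lemma integral_exp_neg_mul_exp_half_mul_sin {δ : ℝ} (hδ : |δ| < 1 / 2) (m : ℤ) :
    ∫ s in (-π)..π, Complex.exp (-(Complex.I * m * s))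
        * (Complex.exp (Complex.I * (1 / 2) * s) * Complex.sin (δ * s))
      = 2 * π * (sinCoeff δ m * Complex.exp ((-((m - 1 / 2) * π) : ℝ) * Complex.I)) := by
  have hsin := integral_exp_neg_mul_sin δ (m - 1 / 2)
  have hexp (s : ℝ) : Complex.exp (-(Complex.I * m * s))
      * (Complex.exp (Complex.I * (1 / 2) * s) * Complex.sin (δ * s))
      = Complex.exp (-(Complex.I * (m - 1 / 2 : ℝ) * s)) * Complex.sin (δ * s) := by
    rw [← mul_assoc, ← Complex.exp_add]
    push_cast
    ring_nf
  have hsq : ((m : ℝ) - 1 / 2) ^ 2 ≠ δ ^ 2 := by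
    have := sq_lt_sq' (abs_lt.1 hδ).1 (abs_lt.1 hδ).2
    linarith [quarter_le_sq_intCast_sub_half m]
  simp_rw [hexp]
  rw [hsin, ← Complex.ofReal_sub,
    sinc_sub_sub_sinc_add_of_cos_eq_zero hsq (cos_int_sub_half_mul_pi m), Complex.exp_mul_I,
    ← Complex.ofReal_cos, ← Complex.ofReal_sin, cos_neg, sin_neg, cos_int_sub_half_mul_pi, sinCoeff]
  push_cast
  ring

lemma hasSum_sin {δ : ℝ} (hδ : |δ| < 1 / 2) {t : ℝ} (ht : t ∈ Set.Icc (-π) π) :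
    HasSum (fun m : ℤ =>
      (sinCoeff δ m : ℂ) * Complex.exp (((m - 1 / 2) * (t - π) : ℝ) * Complex.I))
      (sin (δ * t) : ℝ) := by
  have hs : Summable fun m : ℤ =>
      (sinCoeff δ m : ℂ) * Complex.exp ((-((m - 1 / 2) * π) : ℝ) * Complex.I) :=
    (summable_sinCoeff δ).norm.of_norm_bounded fun m => by
      rw [norm_mul, Complex.norm_exp_ofReal_mul_I, mul_one, Complex.norm_real]
  have hend : Complex.exp (Complex.I * (1 / 2) * (-π : ℝ)) * Complex.sin (δ * (-π : ℝ))
      = Complex.exp (Complex.I * (1 / 2) * π) * Complex.sin (δ * π) := by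
    have hneg : Complex.I * (1 / 2) * (-π : ℝ) = -π / 2 * Complex.I := by push_cast; ring
    have hpos : Complex.I * (1 / 2) * π = π / 2 * Complex.I := by ring
    rw [hneg, hpos, Complex.exp_neg_pi_div_two_mul_I, Complex.exp_pi_div_two_mul_I,
      Complex.ofReal_neg, mul_neg, Complex.sin_neg]
    ring
  have := (hasSum_fourier_of_eq_endpoints
    (f := fun s : ℝ => Complex.exp (Complex.I * (1 / 2) * s) * Complex.sin (δ * s))
    (by fun_prop) hend (integral_exp_neg_mul_exp_half_mul_sin hδ) hs ht).mul_left
    (Complex.exp (-(Complex.I * (1 / 2) * t)))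
  rw [← mul_assoc, ← Complex.exp_add, neg_add_cancel, Complex.exp_zero, one_mul] at this
  push_cast
  refine this.congr_fun fun m => ?_
  rw [mul_left_comm, mul_assoc (sinCoeff δ m : ℂ), ← Complex.exp_add, ← Complex.exp_add]
  push_cast
  ring_nf

lemma hasSum_cosCoeff {δ : ℝ} (hδ : |δ| < 1) : HasSum (cosCoeff δ) (1 - cos (π * δ)) := by
  have := hasSum_one_sub_cos hδ (Set.right_mem_Icc.2 (neg_le_self pi_pos.le))
  simpa only [sub_self, mul_zero, Complex.ofReal_zero, zero_mul, Complex.exp_zero, mul_one,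
    Complex.hasSum_ofReal, mul_comm δ π] using this

lemma hasSum_sinCoeff {δ : ℝ} (hδ : |δ| < 1 / 2) : HasSum (sinCoeff δ) (sin (π * δ)) := by
  have := hasSum_sin hδ (Set.right_mem_Icc.2 (neg_le_self pi_pos.le))
  simpa only [sub_self, mul_zero, Complex.ofReal_zero, zero_mul, Complex.exp_zero, mul_one,
    Complex.hasSum_ofReal, mul_comm δ π] using this

lemma monotoneOn_one_sub_sinc : MonotoneOn (fun x => 1 - sinc x) (Set.Icc 0 π) := by
  intro a ha b hb hab
  rcases eq_or_lt_of_le ha.1 with rfl | ha_pos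
  · simpa using sinc_le_one b
  have hb_pos := ha_pos.trans_le hab
  have := strictConcaveOn_sin_Icc.concaveOn.neg.secant_mono (Set.left_mem_Icc.2 pi_pos.le) ha hb
    ha_pos.ne' hb_pos.ne' hab
  simp only [Pi.neg_apply, sin_zero, neg_zero, sub_zero, neg_div] at this
  simp only [sinc_of_ne_zero ha_pos.ne', sinc_of_ne_zero hb_pos.ne']
  linarith

lemma monotoneOn_mul_cos : MonotoneOn (fun x => x * cos x) (Set.Icc 0 (π / 4)) := by
  refine monotoneOn_of_hasDerivWithinAt_nonneg (convex_Icc _ _) (by fun_prop)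
    (fun x _ => ((hasDerivAt_id x).mul (hasDerivAt_cos x)).hasDerivWithinAt) fun x hx => ?_
  rw [interior_Icc] at hx
  have hsin_le_cos : sin x ≤ cos x := by
    rw [← cos_pi_div_two_sub]
    exact cos_le_cos_of_nonneg_of_le_pi hx.1.le (by linarith [hx.1, pi_pos]) (by linarith [hx.2])
  have hsin : 0 ≤ sin x := sin_nonneg_of_nonneg_of_le_pi hx.1.le (by linarith [hx.2, pi_pos])
  have hx1 : x ≤ 1 := by linarith [hx.2, pi_lt_four]
  simp only [id_eq, one_mul, mul_neg]
  linarith [mul_le_of_le_one_left hsin hx1]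

lemma cosCoeff_abs (δ : ℝ) (m : ℤ) : cosCoeff |δ| m = cosCoeff δ m := by
  rcases abs_choice δ with h | h <;> rw [h]
  simp [cosCoeff, sinc_neg]

lemma abs_sinCoeff_abs (δ : ℝ) (m : ℤ) : |sinCoeff |δ| m| = |sinCoeff δ m| := by
  rcases abs_choice δ with h | h <;> rw [h]
  simp [sinCoeff, neg_div]

lemma abs_cosCoeff_le {δ α : ℝ} (hδ : |δ| ≤ α) (hα : α ≤ 1 / 2) (m : ℤ) :
    |cosCoeff δ m| ≤ cosCoeff α m := by
  rw [← cosCoeff_abs]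
  have hd : 0 ≤ |δ| := abs_nonneg δ
  generalize |δ| = d at *
  have hα0 : 0 ≤ α := hd.trans hδ
  have hπd : 0 ≤ π * d := by positivity
  have hle : π * d ≤ π * α := by gcongr
  have hπα : π * α ≤ π / 2 := by nlinarith [pi_pos]
  rcases eq_or_ne m 0 with rfl | hm
  · simp only [cosCoeff, if_true]
    rw [abs_of_nonneg (sub_nonneg.2 (sinc_le_one _))]
    exact monotoneOn_one_sub_sinc ⟨hπd, by linarith⟩ ⟨by linarith, by linarith⟩ hle
  have hsin_nonneg : 0 ≤ sin (π * d) := sin_nonneg_of_nonneg_of_le_pi hπd (by linarith)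
  have hsin_le : sin (π * d) ≤ sin (π * α) :=
    sin_le_sin_of_le_of_le_pi_div_two (by linarith) hπα hle
  have hden_pos : 0 < (m : ℝ) ^ 2 - α ^ 2 := by nlinarith [one_le_sq_intCast hm]
  have hden_le : (m : ℝ) ^ 2 - α ^ 2 ≤ (m : ℝ) ^ 2 - d ^ 2 := by gcongr
  have hden_pos' := hden_pos.trans_le hden_le
  have hsin_nonneg' := hsin_nonneg.trans hsin_le
  rw [cosCoeff, cosCoeff, if_neg hm, if_neg hm, abs_of_nonneg (by positivity)]
  gcongr

lemma abs_sinCoeff_le {δ α : ℝ} (hδ : |δ| ≤ α) (hα : α ≤ 1 / 4) (m : ℤ) :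
    |sinCoeff δ m| ≤ sinCoeff α m := by
  rw [← abs_sinCoeff_abs]
  have hd : 0 ≤ |δ| := abs_nonneg δ
  generalize |δ| = d at *
  have hπd : 0 ≤ π * d := by positivity
  have hle : π * d ≤ π * α := by gcongr
  have hπα : π * α ≤ π / 4 := by nlinarith [pi_pos]
  have hcos_nonneg : 0 ≤ cos (π * d) := cos_nonneg_of_mem_Icc ⟨by linarith, by linarith⟩
  have hmul_cos_le : d * cos (π * d) ≤ α * cos (π * α) := by
    have := monotoneOn_mul_cos ⟨hπd, hle.trans hπα⟩ ⟨hπd.trans hle, hπα⟩ hle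
    simp only [mul_assoc] at this
    exact le_of_mul_le_mul_left this pi_pos
  have hden_pos : 0 < ((m : ℝ) - 1 / 2) ^ 2 - α ^ 2 := by
    nlinarith [quarter_le_sq_intCast_sub_half m]
  have hden_le : ((m : ℝ) - 1 / 2) ^ 2 - α ^ 2 ≤ ((m : ℝ) - 1 / 2) ^ 2 - d ^ 2 := by gcongr
  have hden_pos' := hden_pos.trans_le hden_le
  have hmul_cos_nonneg : 0 ≤ α * cos (π * α) := le_trans (by positivity) hmul_cos_le
  rw [sinCoeff, sinCoeff, abs_of_nonneg (by positivity)]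
  gcongr

end KadecCoefficients

section MatrixPerturbation

open scoped Matrix Matrix.Norms.L2Operator

lemma norm_hadamard_le_of_hasSum {𝕜 β κ ι : Type*} [RCLike 𝕜] [Fintype κ] [Fintype ι]
    [DecidableEq ι] {φ : Matrix κ ι 𝕜} {u : β → κ → 𝕜} {a : β → ι → 𝕜} {b : β → ℝ} {s : ℝ}
    (hφ : ∀ k j, HasSum (fun m => u m k * a m j) (φ k j)) (hu : ∀ m, ‖u m‖ ≤ 1)
    (ha : ∀ m, ‖a m‖ ≤ b m) (hb : HasSum b s) (A : Matrix κ ι 𝕜) : ‖φ ⊙ A‖ ≤ s * ‖A‖ := by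
  classical
  have hsum : HasSum (fun m => Matrix.diagonal (u m) * A * Matrix.diagonal (a m)) (φ ⊙ A) := by
    refine Pi.hasSum.2 fun k => Pi.hasSum.2 fun j => ?_
    simp only [Matrix.mul_diagonal, Matrix.diagonal_mul, Matrix.hadamard_apply, mul_right_comm]
    exact (hφ k j).mul_right (A k j)
  refine hsum.norm_le_of_bounded (hb.mul_right ‖A‖) fun m => ?_
  calc ‖Matrix.diagonal (u m) * A * Matrix.diagonal (a m)‖
      ≤ ‖Matrix.diagonal (u m)‖ * ‖A‖ * ‖Matrix.diagonal (a m)‖ :=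
        (Matrix.l2_opNorm_mul _ _).trans
          (mul_le_mul_of_nonneg_right (Matrix.l2_opNorm_mul _ _) (norm_nonneg _))
    _ = ‖u m‖ * ‖a m‖ * ‖A‖ := by
        rw [Matrix.l2_opNorm_diagonal, Matrix.l2_opNorm_diagonal, mul_right_comm]
    _ ≤ 1 * b m * ‖A‖ := by gcongr <;> simp only [hu, ha]
    _ = b m * ‖A‖ := by rw [one_mul]

section Kadec

variable {κ ι : Type*} [Fintype κ] [Fintype ι] [DecidableEq ι] {t : κ → ℝ} {δ : ι → ℝ} {α : ℝ}

lemma norm_one_sub_cos_hadamard_le (ht : ∀ k, t k ∈ Set.Icc (-π) π) (hδ : ∀ j, |δ j| ≤ α)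
    (hα0 : 0 ≤ α) (hα : α ≤ 1 / 2) (A : Matrix κ ι ℂ) :
    ‖(Matrix.of fun k j => ((1 - cos (δ j * t k) : ℝ) : ℂ)) ⊙ A‖ ≤ (1 - cos (π * α)) * ‖A‖ := by
  have hα1 : α < 1 := by linarith
  refine norm_hadamard_le_of_hasSum
    (u := fun (m : ℤ) k => Complex.exp ((m * (t k - π) : ℝ) * Complex.I))
    (a := fun m j => (cosCoeff (δ j) m : ℂ)) (fun k j => ?_) (fun m => ?_) (fun m => ?_)
    (hasSum_cosCoeff (by rwa [abs_of_nonneg hα0])) A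
  · simpa only [mul_comm, Matrix.of_apply] using hasSum_one_sub_cos ((hδ j).trans_lt hα1) (ht k)
  · exact (pi_norm_le_iff_of_nonneg zero_le_one).2 fun k => (Complex.norm_exp_ofReal_mul_I _).le
  · have hb : |cosCoeff α m| ≤ cosCoeff α m := abs_cosCoeff_le (abs_of_nonneg hα0).le hα m
    refine (pi_norm_le_iff_of_nonneg ((abs_nonneg _).trans hb)).2 fun j => ?_
    simpa only [Complex.norm_real, norm_eq_abs] using abs_cosCoeff_le (hδ j) hα m

lemma norm_sin_hadamard_le (ht : ∀ k, t k ∈ Set.Icc (-π) π) (hδ : ∀ j, |δ j| ≤ α)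
    (hα0 : 0 ≤ α) (hα : α ≤ 1 / 4) (A : Matrix κ ι ℂ) :
    ‖(Matrix.of fun k j => ((sin (δ j * t k) : ℝ) : ℂ)) ⊙ A‖ ≤ sin (π * α) * ‖A‖ := by
  have hα2 : α < 1 / 2 := by linarith
  refine norm_hadamard_le_of_hasSum
    (u := fun (m : ℤ) k => Complex.exp (((m - 1 / 2) * (t k - π) : ℝ) * Complex.I))
    (a := fun m j => (sinCoeff (δ j) m : ℂ)) (fun k j => ?_) (fun m => ?_) (fun m => ?_)
    (hasSum_sinCoeff (by rwa [abs_of_nonneg hα0])) A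
  · simpa only [mul_comm, Matrix.of_apply] using hasSum_sin ((hδ j).trans_lt hα2) (ht k)
  · exact (pi_norm_le_iff_of_nonneg zero_le_one).2 fun k => (Complex.norm_exp_ofReal_mul_I _).le
  · have hb : |sinCoeff α m| ≤ sinCoeff α m := abs_sinCoeff_le (abs_of_nonneg hα0).le hα m
    refine (pi_norm_le_iff_of_nonneg ((abs_nonneg _).trans hb)).2 fun j => ?_
    simpa only [Complex.norm_real, norm_eq_abs] using abs_sinCoeff_le (hδ j) hα m

lemma norm_exp_hadamard_sub_self_le (ht : ∀ k, t k ∈ Set.Icc (-π) π) (hδ : ∀ j, |δ j| ≤ α)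
    (hα0 : 0 ≤ α) (hα : α ≤ 1 / 4) (A : Matrix κ ι ℂ) :
    ‖(Matrix.of fun k j => Complex.exp ((δ j * t k : ℝ) * Complex.I)) ⊙ A - A‖
      ≤ (1 - cos (π * α) + sin (π * α)) * ‖A‖ := by
  have hdecomp : (Matrix.of fun k j => Complex.exp ((δ j * t k : ℝ) * Complex.I)) ⊙ A - A
      = Complex.I • ((Matrix.of fun k j => ((sin (δ j * t k) : ℝ) : ℂ)) ⊙ A)
        - (Matrix.of fun k j => ((1 - cos (δ j * t k) : ℝ) : ℂ)) ⊙ A := by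
    ext k j
    simp only [Matrix.sub_apply, Matrix.smul_apply, Matrix.hadamard_apply, Matrix.of_apply,
      smul_eq_mul, Complex.exp_mul_I]
    push_cast
    ring
  rw [hdecomp]
  refine (norm_sub_le _ _).trans ?_
  rw [norm_smul, Complex.norm_I, one_mul]
  linarith [norm_sin_hadamard_le ht hδ hα0 hα A,
    norm_one_sub_cos_hadamard_le ht hδ hα0 (by linarith) A]

end Kadec

section ScaledIsometry

variable {𝕜 κ ι : Type*} [RCLike 𝕜] [Fintype κ] [Fintype ι] [DecidableEq ι] {r : ℝ}
  {A B : Matrix κ ι 𝕜}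

lemma norm_le_sqrt_of_conjTranspose_mul_self (hA : Aᴴ * A = (r : 𝕜) • 1) (hr : 0 ≤ r) :
    ‖A‖ ≤ √r := by
  refine le_sqrt_of_sq_le ?_
  rw [sq, ← Matrix.l2_opNorm_conjTranspose_mul_self, hA, norm_smul, RCLike.norm_ofReal,
    abs_of_nonneg hr]
  refine mul_le_of_le_one_right hr ?_
  rw [← Matrix.diagonal_one, Matrix.l2_opNorm_diagonal]
  exact (pi_norm_le_iff_of_nonneg zero_le_one).2 fun _ => norm_one.le

lemma sqrt_mul_norm_le_of_conjTranspose_mul_self (hA : Aᴴ * A = (r : 𝕜) • 1) (hr : 0 < r)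
    (v : EuclideanSpace 𝕜 ι) : √r * ‖v‖ ≤ ‖WithLp.toLp 2 (A *ᵥ v)‖ := by
  classical
  have hv : (r : 𝕜) • v = WithLp.toLp 2 (Aᴴ *ᵥ WithLp.toLp 2 (A *ᵥ v)) := by
    simp [Matrix.mulVec_mulVec, hA, Matrix.smul_mulVec]
  have hmul : √r * (√r * ‖v‖) ≤ √r * ‖WithLp.toLp 2 (A *ᵥ v)‖ :=
    calc √r * (√r * ‖v‖) = ‖(r : 𝕜) • v‖ := by
          rw [norm_smul, RCLike.norm_ofReal, abs_of_nonneg hr.le, ← mul_assoc, mul_self_sqrt hr.le]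
      _ ≤ ‖Aᴴ‖ * ‖WithLp.toLp 2 (A *ᵥ v)‖ := hv ▸ Matrix.l2_opNorm_mulVec _ _
      _ ≤ √r * ‖WithLp.toLp 2 (A *ᵥ v)‖ := by
          rw [Matrix.l2_opNorm_conjTranspose]
          gcongr
          exact norm_le_sqrt_of_conjTranspose_mul_self hA hr.le
  exact le_of_mul_le_mul_left hmul (sqrt_pos.2 hr)

lemma sqrt_mul_norm_le_of_norm_sub_le (hA : Aᴴ * A = (r : 𝕜) • 1) (hr : 0 < r) {θ : ℝ}
    (hθ : 0 ≤ θ) (hBA : ‖B - A‖ ≤ θ * ‖A‖) (v : EuclideanSpace 𝕜 ι) :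
    (1 - θ) * (√r * ‖v‖) ≤ ‖WithLp.toLp 2 (B *ᵥ v)‖ := by
  have hA_le := norm_le_sqrt_of_conjTranspose_mul_self hA hr.le
  have hdiff : ‖WithLp.toLp 2 (A *ᵥ v) - WithLp.toLp 2 (B *ᵥ v)‖ ≤ θ * (√r * ‖v‖) :=
    calc ‖WithLp.toLp 2 (A *ᵥ v) - WithLp.toLp 2 (B *ᵥ v)‖
        = ‖WithLp.toLp 2 ((B - A) *ᵥ v)‖ := by
          rw [norm_sub_rev, ← WithLp.toLp_sub, Matrix.sub_mulVec]
      _ ≤ ‖B - A‖ * ‖v‖ := Matrix.l2_opNorm_mulVec _ _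
      _ ≤ θ * √r * ‖v‖ := by gcongr; exact hBA.trans (by gcongr)
      _ = θ * (√r * ‖v‖) := mul_assoc _ _ _
  linarith [sqrt_mul_norm_le_of_conjTranspose_mul_self hA hr v,
    norm_sub_norm_le (WithLp.toLp 2 (A *ᵥ v)) (WithLp.toLp 2 (B *ᵥ v))]

end ScaledIsometry

end MatrixPerturbation

section ExponentialMatrix

open scoped Matrix Matrix.Norms.L2Operator

lemma sub_one_mul_sum_Icc_zpow {K : Type*} [Field K] {z : K} (hz : z ≠ 0) (N : ℕ) :
    (z - 1) * ∑ k ∈ Icc (-(N : ℤ)) N, z ^ k = z ^ (N + 1 : ℤ) - z ^ (-N : ℤ) := by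
  induction N with
  | zero => simp
  | succ n ih =>
    push_cast
    rw [Finset.sum_Icc_succ_eq_add_endpoints, mul_add, ih, neg_add, zpow_add₀ hz (n + 1 : ℤ) 1,
      zpow_add₀ hz (-n : ℤ) (-1), zpow_one, zpow_neg_one]
    field_simp
    ring

lemma sum_Icc_zpow_eq_zero {K : Type*} [Field K] {z : K} {N : ℕ} (hz : z ^ (2 * N + 1) = 1)
    (hz1 : z ≠ 1) : ∑ k ∈ Icc (-(N : ℤ)) N, z ^ k = 0 := by
  have hz0 : z ≠ 0 := by rintro rfl; simp at hz
  have hends : z ^ (N + 1 : ℤ) = z ^ (-N : ℤ) := by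
    rw [show (N + 1 : ℤ) = -N + (2 * N + 1 : ℕ) by push_cast; ring, zpow_add₀ hz0, zpow_natCast, hz,
      mul_one]
  refine (mul_eq_zero.1 ?_).resolve_left (sub_ne_zero.2 hz1)
  rw [sub_one_mul_sum_Icc_zpow hz0, hends, sub_self]

lemma card_Icc_neg_natCast (N : ℕ) : #(Icc (-(N : ℤ)) N) = 2 * N + 1 := by
  rw [Int.card_Icc]
  omega

lemma sum_Icc_zpow_mul_of_isPrimitiveRoot {K : Type*} [Field K] {ζ : K} {N : ℕ}
    (hζ : IsPrimitiveRoot ζ (2 * N + 1)) {d : ℤ} (hd : |d| ≤ 2 * N) :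
    ∑ k ∈ Icc (-(N : ℤ)) N, ζ ^ (d * k) = if d = 0 then (2 * N + 1 : K) else 0 := by
  split_ifs with hd0
  · simp only [hd0, zero_mul, zpow_zero, sum_const, card_Icc_neg_natCast, nsmul_eq_mul, mul_one]
    push_cast
    rfl
  simp only [zpow_mul]
  refine sum_Icc_zpow_eq_zero ?_ fun h => hd0 ?_
  · rw [← zpow_natCast, ← zpow_mul, mul_comm, zpow_mul, zpow_natCast, hζ.pow_eq_one, one_zpow]
  · refine Int.eq_zero_of_abs_lt_dvd ((hζ.zpow_eq_one_iff_dvd d).1 h) ?_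
    push_cast
    omega

/-- The matrix `(e^{i k x_j})` with `k, j ∈ {-N, …, N}`. Applied to a vector of weights, it lists
the values of the quadrature rule with these weights at the nodes `x_j` on the exponentials
`e^{ikt}` spanning `T_N`. -/
noncomputable def expMatrix (N : ℕ) (x : ℤ → ℝ) :
    Matrix (Icc (-(N : ℤ)) N) (Icc (-(N : ℤ)) N) ℂ :=
  Matrix.of fun k j => Complex.exp (Complex.I * (k : ℤ) * x j)

/-- The unperturbed nodes `j h`, `h = 2π / (2N + 1)`. -/
noncomputable def equispacedNodes (N : ℕ) (j : ℤ) : ℝ :=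
  j * (2 * π / (2 * N + 1))

lemma conj_exp_mul_exp_equispacedNodes (N : ℕ) (k j l : ℤ) :
    star (Complex.exp (Complex.I * k * equispacedNodes N j))
        * Complex.exp (Complex.I * k * equispacedNodes N l)
      = Complex.exp (2 * π * Complex.I / (2 * N + 1 : ℕ)) ^ ((l - j) * k) := by
  rw [← Complex.exp_int_mul, Complex.star_def, ← Complex.exp_conj, ← Complex.exp_add,
    equispacedNodes, equispacedNodes]
  simp only [map_mul, Complex.conj_I, Complex.conj_ofReal, map_intCast]
  push_cast
  ring_nf

lemma expMatrix_equispacedNodes_conjTranspose_mul_self (N : ℕ) :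
    (expMatrix N (equispacedNodes N))ᴴ * expMatrix N (equispacedNodes N)
      = ((2 * N + 1 : ℝ) : ℂ) • 1 := by
  ext j l
  have hdist : |(l : ℤ) - j| ≤ 2 * N := by
    have hj := Finset.mem_Icc.1 j.2
    have hl := Finset.mem_Icc.1 l.2
    rw [abs_le]
    omega
  have hjl : (l : ℤ) - j = 0 ↔ j = l := by rw [sub_eq_zero, Subtype.ext_iff, eq_comm]
  simp only [Matrix.mul_apply, Matrix.conjTranspose_apply, expMatrix, Matrix.of_apply,
    conj_exp_mul_exp_equispacedNodes]
  rw [Finset.sum_coe_sort (Icc (-(N : ℤ)) N)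
    fun k => Complex.exp (2 * π * Complex.I / (2 * N + 1 : ℕ)) ^ (((l : ℤ) - j) * k),
    sum_Icc_zpow_mul_of_isPrimitiveRoot (Complex.isPrimitiveRoot_exp _ (by omega)) hdist,
    Matrix.smul_apply, Matrix.one_apply]
  simp only [hjl, smul_eq_mul, mul_ite, mul_one, mul_zero]
  push_cast
  rfl

lemma equispacedNodes_mem_Icc {N : ℕ} {k : ℤ} (hk : k ∈ Icc (-(N : ℤ)) N) :
    equispacedNodes N k ∈ Set.Icc (-π) π := by
  have habs : |(k : ℝ)| ≤ N := by exact_mod_cast abs_le.2 (Finset.mem_Icc.1 hk)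
  have hstep : (0 : ℝ) < 2 * π / (2 * N + 1) := by positivity
  rw [Set.mem_Icc, ← abs_le, equispacedNodes, abs_mul, abs_of_pos hstep, mul_div_assoc',
    div_le_iff₀ (by positivity)]
  nlinarith [pi_pos]

lemma expMatrix_eq_hadamard (N : ℕ) (x : ℤ → ℝ) :
    expMatrix N x
      = (Matrix.of fun k j : Icc (-(N : ℤ)) N => Complex.exp (((x j - equispacedNodes N j)
          / (2 * π / (2 * N + 1)) * equispacedNodes N k : ℝ) * Complex.I))
        ⊙ expMatrix N (equispacedNodes N) := by
  ext k j
  have hphase : (x j - equispacedNodes N j) / (2 * π / (2 * N + 1)) * equispacedNodes N k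
      = (k : ℤ) * (x j - equispacedNodes N j) := by
    simp only [equispacedNodes]
    field_simp
  rw [Matrix.hadamard_apply, expMatrix, expMatrix, Matrix.of_apply, Matrix.of_apply,
    Matrix.of_apply, ← Complex.exp_add, hphase]
  congr 1
  push_cast
  ring

lemma PerturbedNodes.mul_norm_le_norm_expMatrix_mulVec {α : ℝ} (hα0 : 0 ≤ α) (hα : α ≤ 1 / 4)
    {N : ℕ} {x : ℤ → ℝ} (hx : PerturbedNodes N α x) (v : EuclideanSpace ℂ (Icc (-(N : ℤ)) N)) :
    (cos (π * α) - sin (π * α)) * (√(2 * N + 1) * ‖v‖)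
      ≤ ‖WithLp.toLp 2 (expMatrix N x *ᵥ v)‖ := by
  have hstep : (0 : ℝ) < 2 * π / (2 * N + 1) := by positivity
  have hδ (j : Icc (-(N : ℤ)) N) :
      |(x j - equispacedNodes N j) / (2 * π / (2 * N + 1))| ≤ α := by
    rw [abs_div, abs_of_pos hstep, div_le_iff₀ hstep]
    exact hx j j.2
  have hkadec := norm_exp_hadamard_sub_self_le (fun k => equispacedNodes_mem_Icc k.2) hδ hα0 hα
    (expMatrix N (equispacedNodes N))
  rw [← expMatrix_eq_hadamard] at hkadec
  have hθ : 0 ≤ 1 - cos (π * α) + sin (π * α) :=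
    add_nonneg (sub_nonneg.2 (cos_le_one _))
      (sin_nonneg_of_nonneg_of_le_pi (by positivity) (by nlinarith [pi_pos]))
  have hN : (0 : ℝ) < 2 * N + 1 := by positivity
  have hbound := sqrt_mul_norm_le_of_norm_sub_le
    (expMatrix_equispacedNodes_conjTranspose_mul_self N) hN hθ hkadec v
  rwa [← sub_sub, sub_sub_cancel] at hbound

end ExponentialMatrix

section Weights

lemma isTrigPoly_sum {N : ℕ} {s : Finset ℤ} (hs : s ⊆ Icc (-(N : ℤ)) N) (c : ℤ → ℂ) :
    IsTrigPoly N fun t => ∑ k ∈ s, c k * Complex.exp (Complex.I * k * t) := by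
  refine ⟨fun k => if k ∈ s then c k else 0, fun t => ?_⟩
  simp only [ite_mul, zero_mul, Finset.sum_ite_mem, Finset.inter_eq_right.2 hs]

lemma isTrigPoly_exp {N : ℕ} {k : ℤ} (hk : k ∈ Icc (-(N : ℤ)) N) :
    IsTrigPoly N fun t => Complex.exp (Complex.I * k * t) := by
  simpa using isTrigPoly_sum (Finset.singleton_subset_iff.2 hk) 1

open scoped Matrix

lemma ExactQuad.expMatrix_mulVec {N : ℕ} {x w : ℤ → ℝ} (hw : ExactQuad N x w) :
    expMatrix N x *ᵥ (fun j => (w j : ℂ))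
      = Pi.single ⟨0, Finset.mem_Icc.2 ⟨neg_nonpos.2 N.cast_nonneg, N.cast_nonneg⟩⟩
        (2 * π : ℂ) := by
  ext k
  have hexact := hw _ (isTrigPoly_exp k.2)
  rw [integral_exp_I_mul_int, ← Finset.sum_coe_sort] at hexact
  simp only [Matrix.mulVec, dotProduct, expMatrix, Matrix.of_apply, mul_comm _ (w _ : ℂ), hexact,
    Pi.single_apply, Subtype.ext_iff]

lemma sum_norm_le_sqrt_card_mul_norm {𝕜 ι : Type*} [RCLike 𝕜] [Fintype ι]
    (v : EuclideanSpace 𝕜 ι) : ∑ j, ‖v j‖ ≤ √(Fintype.card ι) * ‖v‖ := by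
  rw [EuclideanSpace.norm_eq, ← sqrt_mul (Nat.cast_nonneg _)]
  exact le_sqrt_of_sq_le sq_sum_le_card_mul_sum_sq

lemma sin_lt_cos_pi_mul {α : ℝ} (hα0 : 0 ≤ α) (hα : α < 1 / 4) : sin (π * α) < cos (π * α) := by
  have hπα0 : 0 ≤ π * α := by positivity
  have hπα : π * α < π / 4 := by nlinarith [pi_pos]
  rw [← cos_pi_div_two_sub]
  exact cos_lt_cos_of_nonneg_of_le_pi hπα0 (by linarith) (by linarith)

lemma ExactQuad.sum_abs_le {α : ℝ} (hα0 : 0 ≤ α) (hα : α < 1 / 4) {N : ℕ} {x w : ℤ → ℝ}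
    (hw : ExactQuad N x w) (hx : PerturbedNodes N α x) :
    ∑ j ∈ Icc (-(N : ℤ)) N, |w j| ≤ 2 * π / (cos (π * α) - sin (π * α)) := by
  have hgap : 0 < cos (π * α) - sin (π * α) := sub_pos.2 (sin_lt_cos_pi_mul hα0 hα)
  set v := WithLp.toLp 2 fun j : Icc (-(N : ℤ)) N => (w j : ℂ)
  rw [le_div_iff₀' hgap]
  calc (cos (π * α) - sin (π * α)) * ∑ j ∈ Icc (-(N : ℤ)) N, |w j|
      ≤ (cos (π * α) - sin (π * α)) * (√(2 * N + 1) * ‖v‖) := by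
        gcongr
        have hv := sum_norm_le_sqrt_card_mul_norm v
        simp only [v, Complex.norm_real, norm_eq_abs, Fintype.card_coe, card_Icc_neg_natCast] at hv
        rw [Finset.sum_coe_sort (Icc (-(N : ℤ)) N) fun j => |w j|] at hv
        exact_mod_cast hv
    _ ≤ ‖WithLp.toLp 2 (expMatrix N x *ᵥ v)‖ := hx.mul_norm_le_norm_expMatrix_mulVec hα0 hα.le v
    _ = 2 * π := by
        rw [hw.expMatrix_mulVec, PiLp.toLp_single, PiLp.norm_single]
        simp [abs_of_pos pi_pos]

end Weights

section Density

lemma IsTrigPoly.mono {M N : ℕ} (h : M ≤ N) {q : ℝ → ℂ} (hq : IsTrigPoly M q) :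
    IsTrigPoly N q := by
  obtain ⟨c, hc⟩ := hq
  rw [funext hc]
  exact isTrigPoly_sum (Finset.Icc_subset_Icc (by omega) (by omega)) c

lemma IsTrigPoly.continuous {N : ℕ} {q : ℝ → ℂ} (hq : IsTrigPoly N q) : Continuous q := by
  obtain ⟨c, hc⟩ := hq
  rw [funext hc]
  fun_prop

lemma exists_isTrigPoly_of_mem_span_fourier {g : C(AddCircle (2 * π), ℂ)}
    (hg : g ∈ Submodule.span ℂ (Set.range (fourier (T := 2 * π)))) :
    ∃ N : ℕ, IsTrigPoly N fun t : ℝ => g t := by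
  obtain ⟨c, rfl⟩ := Finsupp.mem_span_range_iff_exists_finsupp.1 hg
  set N := c.support.sup Int.natAbs
  have hsupp : c.support ⊆ Icc (-(N : ℤ)) N := fun k hk => by
    have := Finset.le_sup (f := Int.natAbs) hk
    rw [Finset.mem_Icc]
    omega
  refine ⟨N, ?_⟩
  simp only [Finsupp.sum, ContinuousMap.sum_apply, ContinuousMap.smul_apply,
    fourier_two_pi_coe_apply, smul_eq_mul]
  exact isTrigPoly_sum hsupp c

lemma exists_isTrigPoly_norm_sub_lt {f : ℝ → ℂ} (hfc : Continuous f)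
    (hfp : Function.Periodic f (2 * π)) {ε : ℝ} (hε : 0 < ε) :
    ∃ (N : ℕ) (q : ℝ → ℂ), IsTrigPoly N q ∧ ∀ t, ‖f t - q t‖ < ε := by
  have : Fact (0 < 2 * π) := ⟨two_pi_pos⟩
  let F : C(AddCircle (2 * π), ℂ) := ⟨hfp.lift, continuous_coinduced_dom.2 hfc⟩
  have hF : F ∈ closure (Submodule.span ℂ (Set.range (fourier (T := 2 * π))) : Set _) := by
    rw [← Submodule.topologicalClosure_coe, span_fourier_closure_eq_top]
    trivial
  obtain ⟨g, hg, hFg⟩ := Metric.mem_closure_iff.1 hF ε hε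
  obtain ⟨N, hN⟩ := exists_isTrigPoly_of_mem_span_fourier hg
  refine ⟨N, _, hN, fun t => ?_⟩
  rw [← dist_eq_norm]
  exact (ContinuousMap.dist_apply_le_dist (f := F) (g := g) t).trans_lt hFg

end Density

section Convergence

lemma ExactQuad.norm_sub_integral_le {N : ℕ} {x w : ℤ → ℝ} (hw : ExactQuad N x w)
    {f q : ℝ → ℂ} (hf : Continuous f) (hq : IsTrigPoly N q) {ε : ℝ}
    (hfq : ∀ t, ‖f t - q t‖ ≤ ε) :
    ‖∑ j ∈ Icc (-(N : ℤ)) N, (w j : ℂ) * f (x j) - ∫ t in (-π)..π, f t‖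
      ≤ (∑ j ∈ Icc (-(N : ℤ)) N, |w j| + 2 * π) * ε := by
  have herror : ∑ j ∈ Icc (-(N : ℤ)) N, (w j : ℂ) * f (x j) - ∫ t in (-π)..π, f t
      = ∑ j ∈ Icc (-(N : ℤ)) N, (w j : ℂ) * (f (x j) - q (x j))
        - ∫ t in (-π)..π, (f t - q t) := by
    rw [intervalIntegral.integral_sub (hf.intervalIntegrable _ _)
      (hq.continuous.intervalIntegrable _ _), ← hw q hq]
    simp only [mul_sub, Finset.sum_sub_distrib]
    ring
  have hsum : ‖∑ j ∈ Icc (-(N : ℤ)) N, (w j : ℂ) * (f (x j) - q (x j))‖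
      ≤ (∑ j ∈ Icc (-(N : ℤ)) N, |w j|) * ε := by
    rw [Finset.sum_mul]
    refine norm_sum_le_of_le _ fun j _ => ?_
    rw [norm_mul, Complex.norm_real, norm_eq_abs]
    gcongr
    exact hfq _
  have hint : ‖∫ t in (-π)..π, (f t - q t)‖ ≤ 2 * π * ε := by
    have := intervalIntegral.norm_integral_le_of_norm_le_const (a := -π) (b := π)
      fun t _ => hfq t
    rwa [sub_neg_eq_add, ← two_mul, abs_of_pos two_pi_pos, mul_comm] at this
  rw [herror, add_mul]
  exact (norm_sub_le _ _).trans (add_le_add hsum hint)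

lemma tendsto_quadrature_of_sum_abs_le {x w : ℕ → ℤ → ℝ} {C : ℝ}
    (hw : ∀ᶠ N in Filter.atTop, ExactQuad N (x N) (w N))
    (hC : ∀ᶠ N : ℕ in Filter.atTop, ∑ j ∈ Icc (-(N : ℤ)) N, |w N j| ≤ C) {f : ℝ → ℂ}
    (hfc : Continuous f) (hfp : Function.Periodic f (2 * π)) :
    Filter.Tendsto (fun N : ℕ => ∑ j ∈ Icc (-(N : ℤ)) N, (w N j : ℂ) * f (x N j)) Filter.atTop
      (nhds (∫ t in (-π)..π, f t)) := by
  refine Metric.tendsto_nhds.2 fun ε hε => ?_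
  obtain ⟨η, hη, hηε⟩ := exists_pos_mul_lt hε (C + 2 * π)
  obtain ⟨M, q, hq, hfq⟩ := exists_isTrigPoly_norm_sub_lt hfc hfp hη
  filter_upwards [hw, hC, Filter.eventually_ge_atTop M] with N hwN hCN hMN
  rw [dist_eq_norm]
  calc _ ≤ (∑ j ∈ Icc (-(N : ℤ)) N, |w N j| + 2 * π) * η :=
        hwN.norm_sub_integral_le hfc (hq.mono hMN) fun t => (hfq t).le
    _ ≤ (C + 2 * π) * η := by gcongr
    _ < ε := hηε

end Convergence

/-- quadrature rules at α-perturbed nodes (α < 1/4) converge for every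
continuous 2π-periodic function. -/
theorem quadrature_converges (α : ℝ) (hα0 : 0 ≤ α) (hα : α < 1/4)
    (x : ℕ → ℤ → ℝ) (w : ℕ → ℤ → ℝ)
    (hx : ∀ N : ℕ, 0 < N → PerturbedNodes N α (x N))
    (hw : ∀ N : ℕ, 0 < N → ExactQuad N (x N) (w N))
    (f : ℝ → ℂ) (hfc : Continuous f) (hfp : Function.Periodic f (2*π)) :
    Filter.Tendsto
      (fun N : ℕ => ∑ j ∈ Finset.Icc (-(N:ℤ)) (N:ℤ), (w N j : ℂ) * f (x N j))
      Filter.atTop (nhds (∫ t in (-π)..π, f t)) := by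
  have hpos : ∀ᶠ N : ℕ in Filter.atTop, 0 < N := Filter.eventually_gt_atTop 0
  exact tendsto_quadrature_of_sum_abs_le (hpos.mono hw)
    (hpos.mono fun N hN => (hw N hN).sum_abs_le hα0 hα (hx N hN)) hfc hfp
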